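/- Let 1 ≤ p < ∞, let S ⊆ M_N be a complex linear subspace, and let u : S → M_m be a linear map such that for every n ≥ 1 and every x ∈ S ⊗ M_n, ‖(u ⊗ id_{M_n})(x)‖_{S_p^m[M_n]} ≤ ‖x‖_{S_p^N[M_n]}. Then for every v ∈ S ⊗ M_m, viewed as an element of M_N ⊗ M_m, one has |T((u ⊗ id_{M_m})(v))| ≤ ρ_p(v). (Inequality (3.11), the key step in the proof of the extension theorem 3.5, where ρ_p is taken on M_N ⊗ M_m.) -/

import Mathlib

open scoped Kronecker ENNReal Classical ComplexOrder
open Matrix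

noncomputable section

/-- The operator norm (`S_∞` norm) of a complex matrix, acting on Euclidean space. -/
def opNorm {ι : Type} [Fintype ι] [DecidableEq ι] (a : Matrix ι ι ℂ) : ℝ :=
  ‖LinearMap.toContinuousLinearMap (Matrix.toEuclideanLin a)‖

/-- The Schatten `p`-norm of a complex matrix: the `ℓ^p` norm of its singular values
(the square roots of the eigenvalues of `aᴴ * a`); for `p = ∞` it is the operator norm. -/
def schattenNorm {ι : Type} [Fintype ι] [DecidableEq ι] (p : ℝ≥0∞) (a : Matrix ι ι ℂ) : ℝ :=
  if p = ∞ then opNorm a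
  else (∑ i, Real.sqrt ((Matrix.posSemidef_conjTranspose_mul_self a).isHermitian.eigenvalues i) ^ p.toReal)
      ^ (1 / p.toReal)

/-- Pisier's vector-valued Schatten norm `‖x‖_{S_p^N[M_n]}` on `M_N ⊗ M_n`:
the infimum of `‖a‖_{S_{2p}} ‖y‖_{S_∞} ‖b‖_{S_{2p}}` over factorizations
`x = (a ⊗ 1) · y · (b ⊗ 1)`. -/
def pisierNorm (p : ℝ≥0∞) {N n : ℕ} (x : Matrix (Fin N × Fin n) (Fin N × Fin n) ℂ) : ℝ :=
  sInf { r | ∃ (a b : Matrix (Fin N) (Fin N) ℂ)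
      (y : Matrix (Fin N × Fin n) (Fin N × Fin n) ℂ),
      x = (a ⊗ₖ (1 : Matrix (Fin n) (Fin n) ℂ)) * y * (b ⊗ₖ (1 : Matrix (Fin n) (Fin n) ℂ)) ∧
      r = schattenNorm (2 * p) a * opNorm y * schattenNorm (2 * p) b }

/-- The amplification `u ⊗ id_{M_n} : M_N ⊗ M_n → M_m ⊗ M_n` of a map `u : M_N → M_m`,
acting as `u` on each `M_n`-block entry. -/
def amp {N m n : ℕ} (u : Matrix (Fin N) (Fin N) ℂ → Matrix (Fin m) (Fin m) ℂ)
    (x : Matrix (Fin N × Fin n) (Fin N × Fin n) ℂ) : Matrix (Fin m × Fin n) (Fin m × Fin n) ℂ :=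
  Matrix.of fun ik jl => u (Matrix.of fun i j => x (i, ik.2) (j, jl.2)) ik.1 jl.1

/-- The amplification `id_{M_n} ⊗ u : M_n ⊗ M_N → M_n ⊗ M_m` of a map `u : M_N → M_m`. -/
def ampLeft {n N m : ℕ} (u : Matrix (Fin N) (Fin N) ℂ → Matrix (Fin m) (Fin m) ℂ)
    (x : Matrix (Fin n × Fin N) (Fin n × Fin N) ℂ) : Matrix (Fin n × Fin m) (Fin n × Fin m) ℂ :=
  Matrix.of fun ki lj => u (Matrix.of fun i j => x (ki.1, i) (lj.1, j)) ki.2 lj.2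

/-- The trace pairing `T : M_k ⊗ M_k → ℂ`, with `T(a ⊗ b) = tr(ᵗa·b)`; writing
`z` as a `k×k` matrix of blocks `z_{ij} ∈ M_k`, `T(z) = Σ_{i,j} (z_{ij})_{ij}`. -/
def tracePair {k : ℕ} (z : Matrix (Fin k × Fin k) (Fin k × Fin k) ℂ) : ℂ :=
  ∑ i : Fin k, ∑ j : Fin k, z (i, i) (j, j)

/-- A map `u : M_N → M_m` is completely positive if all its amplifications
`id_{M_n} ⊗ u` preserve positive semidefiniteness. -/
def CompletelyPositive {N m : ℕ}
    (u : Matrix (Fin N) (Fin N) ℂ → Matrix (Fin m) (Fin m) ℂ) : Prop :=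
  ∀ (n : ℕ) (x : Matrix (Fin n × Fin N) (Fin n × Fin N) ℂ),
    x.PosSemidef → (ampLeft u x).PosSemidef

/-- The regular norm (relative to `p`) of `u : M_N → M_m`: the supremum in `[0,∞]`
over `n ≥ 1` of the norms of the amplifications `u ⊗ id_{M_n}` from
`(M_N ⊗ M_n, ‖·‖_{S_p^N[M_n]})` to `(M_m ⊗ M_n, ‖·‖_{S_p^m[M_n]})`. -/
def regNorm (p : ℝ≥0∞) {N m : ℕ}
    (u : Matrix (Fin N) (Fin N) ℂ → Matrix (Fin m) (Fin m) ℂ) : ℝ≥0∞ :=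
  ⨆ (n : ℕ) (x : Matrix (Fin N × Fin (n + 1)) (Fin N × Fin (n + 1)) ℂ)
    (_ : pisierNorm p x ≤ 1), ENNReal.ofReal (pisierNorm p (amp u x))

/-- Pisier's norm `ρ_p` on `M_n ⊗ M_m` (with `q` the conjugate exponent `p'`):
the infimum of `‖γ‖_{S_{2p}} ‖α‖_{S_{2p'}} ‖g‖_{S_∞} ‖δ‖_{S_{2p}} ‖β‖_{S_{2p'}}`
over factorizations `a = (γ ⊗ α) · g · (δ ⊗ β)`. -/
def rho (p q : ℝ≥0∞) {n m : ℕ} (a : Matrix (Fin n × Fin m) (Fin n × Fin m) ℂ) : ℝ :=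
  sInf { r | ∃ (γ δ : Matrix (Fin n) (Fin n) ℂ) (α β : Matrix (Fin m) (Fin m) ℂ)
      (g : Matrix (Fin n × Fin m) (Fin n × Fin m) ℂ),
      a = (γ ⊗ₖ α) * g * (δ ⊗ₖ β) ∧
      r = schattenNorm (2 * p) γ * schattenNorm (2 * q) α * opNorm g *
          schattenNorm (2 * p) δ * schattenNorm (2 * q) β }

/-- The amplification `u ⊗ id_{M_n}` of a map `u` defined only on a subspace `S ⊆ M_N`,
applied to an element of `M_N ⊗ M_n` all of whose `M_N`-valued block entries lie in `S`. -/
def ampOn {N m n : ℕ} (S : Submodule ℂ (Matrix (Fin N) (Fin N) ℂ))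
    (u : S →ₗ[ℂ] Matrix (Fin m) (Fin m) ℂ)
    (x : Matrix (Fin N × Fin n) (Fin N × Fin n) ℂ)
    (h : ∀ k l : Fin n, (Matrix.of fun i j => x (i, k) (j, l)) ∈ S) :
    Matrix (Fin m × Fin n) (Fin m × Fin n) ℂ :=
  Matrix.of fun ik jl => u ⟨Matrix.of fun i j => x (i, ik.2) (j, jl.2), h ik.2 jl.2⟩ ik.1 jl.1

end

open scoped Matrix.Norms.L2Operator in
theorem opNorm_eq_l2 {ι : Type} [Fintype ι] [DecidableEq ι] (a : Matrix ι ι ℂ) :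
    opNorm a = ‖a‖ := rfl

theorem opNorm_nonneg {ι : Type} [Fintype ι] [DecidableEq ι] (a : Matrix ι ι ℂ) :
    0 ≤ opNorm a := norm_nonneg _

theorem opNorm_mul_le {ι : Type} [Fintype ι] [DecidableEq ι] (a b : Matrix ι ι ℂ) :
    opNorm (a * b) ≤ opNorm a * opNorm b :=
  Matrix.l2_opNorm_mul a b

theorem schattenNorm_nonneg {ι : Type} [Fintype ι] [DecidableEq ι] (p : ℝ≥0∞)
    (a : Matrix ι ι ℂ) : 0 ≤ schattenNorm p a := by
  unfold schattenNorm
  split_ifs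
  · exact opNorm_nonneg a
  · positivity

theorem schattenNorm_conjTranspose {ι : Type} [Fintype ι] [DecidableEq ι] (p : ℝ≥0∞)
    (a : Matrix ι ι ℂ) : schattenNorm p aᴴ = schattenNorm p a := by
  unfold schattenNorm
  split_ifs
  · exact Matrix.l2_opNorm_conjTranspose a
  · have h : (posSemidef_conjTranspose_mul_self aᴴ).isHermitian.eigenvalues =
        (posSemidef_conjTranspose_mul_self a).isHermitian.eigenvalues := by
      rw [IsHermitian.eigenvalues_eq_eigenvalues_iff, conjTranspose_conjTranspose,
        charpoly_mul_comm]
    rw [h]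

/-- The spectral expansion of `tr (A Cᵀ)` in eigenbases of two Hermitian matrices. -/
theorem trace_mul_transpose_eq_sum_eigenvalues {ι : Type} [Fintype ι] [DecidableEq ι]
    {A C : Matrix ι ι ℂ} (hA : A.IsHermitian) (hC : C.IsHermitian) :
    trace (A * Cᵀ) = ((∑ k, ∑ l, hA.eigenvalues k * hC.eigenvalues l *
      ‖((hA.eigenvectorUnitary : Matrix ι ι ℂ)ᵀ * (hC.eigenvectorUnitary : Matrix ι ι ℂ)) k l‖ ^ 2
        : ℝ) : ℂ) := by
  set U : Matrix ι ι ℂ := (hA.eigenvectorUnitary : Matrix ι ι ℂ) with hU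
  set V : Matrix ι ι ℂ := (hC.eigenvectorUnitary : Matrix ι ι ℂ) with hV
  set D : Matrix ι ι ℂ := diagonal (RCLike.ofReal ∘ hA.eigenvalues) with hD
  set E : Matrix ι ι ℂ := diagonal (RCLike.ofReal ∘ hC.eigenvalues) with hE
  have hAe : A = U * D * Uᴴ := by
    have := hA.spectral_theorem
    rwa [Unitary.conjStarAlgAut_apply] at this
  have hCe : C = V * E * Vᴴ := by
    have := hC.spectral_theorem
    rwa [Unitary.conjStarAlgAut_apply] at this
  have hW : (Uᵀ * V)ᴴᵀ = Uᴴ * Vᴴᵀ := by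
    rw [conjTranspose_mul, transpose_mul]
    congr 1
  have h1 : A * Cᵀ = U * (D * ((Uᵀ * V)ᴴᵀ * (E * Vᵀ))) := by
    rw [hW, hAe, hCe]
    simp only [transpose_mul, hE, diagonal_transpose, Matrix.mul_assoc]
  have h2 : Vᵀ * U = (Uᵀ * V)ᵀ := by simp [transpose_mul]
  rw [h1, trace_mul_comm]
  have h3 : D * ((Uᵀ * V)ᴴᵀ * (E * Vᵀ)) * U = D * ((Uᵀ * V)ᴴᵀ * (E * (Uᵀ * V)ᵀ)) := by
    rw [← h2]; simp only [Matrix.mul_assoc]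
  rw [h3]
  set W := Uᵀ * V
  simp only [trace, diag_apply, hD, hE, diagonal_mul, mul_apply (M := Wᴴᵀ), transpose_apply,
    conjTranspose_apply, Function.comp_apply]
  push_cast
  refine Finset.sum_congr rfl fun k _ => ?_
  rw [Finset.mul_sum]
  refine Finset.sum_congr rfl fun l _ => ?_
  have : (‖W k l‖ : ℂ) ^ 2 = star (W k l) * W k l := by
    rw [mul_comm]; exact (Complex.mul_conj' _).symm
  rw [this]
  simp only [Complex.coe_algebraMap]
  ring

theorem sum_norm_sq_row_of_mem_unitary {ι : Type} [Fintype ι] [DecidableEq ι]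
    {W : Matrix ι ι ℂ} (hW : W * Wᴴ = 1) (k : ι) : ∑ l, ‖W k l‖ ^ 2 = 1 := by
  have h := congrFun (congrFun hW k) k
  simp only [mul_apply, conjTranspose_apply, one_apply_eq] at h
  have h' : ((∑ l, ‖W k l‖ ^ 2 : ℝ) : ℂ) = 1 := by
    rw [← h]
    push_cast
    exact Finset.sum_congr rfl fun l _ => (Complex.mul_conj' _).symm
  exact_mod_cast h'

/-- Hölder's inequality for a doubly stochastic family of weights. -/
theorem sum_weight_mul_le_Lp_mul_Lq {ι κ : Type} [Fintype ι] [Fintype κ] {p q : ℝ}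
    (hpq : p.HolderConjugate q) {x : ι → ℝ} {y : κ → ℝ} {w : ι → κ → ℝ}
    (hx : ∀ k, 0 ≤ x k) (hy : ∀ l, 0 ≤ y l) (hw : ∀ k l, 0 ≤ w k l)
    (hrow : ∀ k, ∑ l, w k l = 1) (hcol : ∀ l, ∑ k, w k l = 1) :
    ∑ k, ∑ l, x k * y l * w k l ≤ (∑ k, x k ^ p) ^ (1 / p) * (∑ l, y l ^ q) ^ (1 / q) := by
  have hp := hpq.pos
  have hq := hpq.symm.pos
  have key := Real.inner_le_Lp_mul_Lq_of_nonneg (Finset.univ : Finset (ι × κ))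
    (f := fun i => x i.1 * w i.1 i.2 ^ p⁻¹) (g := fun i => y i.2 * w i.1 i.2 ^ q⁻¹) hpq
    (fun i _ => mul_nonneg (hx _) (Real.rpow_nonneg (hw _ _) _))
    (fun i _ => mul_nonneg (hy _) (Real.rpow_nonneg (hw _ _) _))
  have hf : ∑ i : ι × κ, (x i.1 * w i.1 i.2 ^ p⁻¹) ^ p = ∑ k, x k ^ p := by
    rw [Fintype.sum_prod_type]
    refine Finset.sum_congr rfl fun k _ => ?_
    simp only [Real.mul_rpow (hx _) (Real.rpow_nonneg (hw _ _) _),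
      Real.rpow_inv_rpow (hw _ _) hp.ne', ← Finset.mul_sum, hrow, mul_one]
  have hg : ∑ i : ι × κ, (y i.2 * w i.1 i.2 ^ q⁻¹) ^ q = ∑ l, y l ^ q := by
    rw [Fintype.sum_prod_type_right]
    refine Finset.sum_congr rfl fun l _ => ?_
    simp only [Real.mul_rpow (hy _) (Real.rpow_nonneg (hw _ _) _),
      Real.rpow_inv_rpow (hw _ _) hq.ne', ← Finset.mul_sum, hcol, mul_one]
  rw [hf, hg, Fintype.sum_prod_type] at key
  refine le_of_eq_of_le ?_ key
  refine Finset.sum_congr rfl fun k _ => Finset.sum_congr rfl fun l _ => ?_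
  have : w k l = w k l ^ p⁻¹ * w k l ^ q⁻¹ := by
    rw [← Real.rpow_add' (hw _ _) (by rw [hpq.inv_add_inv_eq_one]; norm_num),
      hpq.inv_add_inv_eq_one, Real.rpow_one]
  conv_lhs => rw [this]
  ring

theorem schattenNorm_two_mul_sq {ι : Type} [Fintype ι] [DecidableEq ι] {p : ℝ≥0∞} (hp : p ≠ ∞)
    (a : Matrix ι ι ℂ) : schattenNorm (2 * p) a ^ 2 =
      (∑ i, (posSemidef_conjTranspose_mul_self a).isHermitian.eigenvalues i ^ p.toReal)
        ^ (1 / p.toReal) := by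
  have h2p : 2 * p ≠ ∞ := ENNReal.mul_ne_top (by simp) hp
  have hnn := (posSemidef_conjTranspose_mul_self a).eigenvalues_nonneg
  have hs : ∀ i, √((posSemidef_conjTranspose_mul_self a).isHermitian.eigenvalues i) ^
      (2 * p).toReal =
      (posSemidef_conjTranspose_mul_self a).isHermitian.eigenvalues i ^ p.toReal := fun i => by
    rw [ENNReal.toReal_mul, Real.rpow_mul (Real.sqrt_nonneg _)]
    congr 1
    simpa using Real.sq_sqrt (hnn i)
  rw [schattenNorm, if_neg h2p]
  simp only [hs]
  rw [← Real.rpow_natCast, ← Real.rpow_mul (Finset.sum_nonneg fun i _ =>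
    Real.rpow_nonneg (hnn i) _), ENNReal.toReal_mul]
  congr 1
  simp

open scoped Matrix.Norms.L2Operator in
theorem eigenvalues_conjTranspose_mul_self_le {ι : Type} [Fintype ι] [DecidableEq ι]
    (a : Matrix ι ι ℂ) (i : ι) :
    (posSemidef_conjTranspose_mul_self a).isHermitian.eigenvalues i ≤ opNorm a ^ 2 := by
  have : Nonempty ι := ⟨i⟩
  have h := (posSemidef_conjTranspose_mul_self a).isHermitian.eigenvalues_mem_spectrum_real i
  rw [← spectrum.algebraMap_mem_iff ℂ] at h
  have h' := spectrum.norm_le_norm_of_mem h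
  rw [l2_opNorm_conjTranspose_mul_self, ← opNorm_eq_l2, ← sq] at h'
  refine (le_abs_self _).trans ?_
  simpa using h'

/-- Hölder's inequality `‖b βᵀ‖_{S_2} ≤ ‖b‖_{S_{2p}} ‖β‖_{S_{2q}}`. -/
theorem sum_norm_sq_mul_transpose_le {ι : Type} [Fintype ι] [DecidableEq ι] {p q : ℝ≥0∞}
    (hptop : p ≠ ∞) (hpq : p⁻¹ + q⁻¹ = 1) (b β : Matrix ι ι ℂ) :
    ∑ k, ∑ l, ‖(b * βᵀ) k l‖ ^ 2 ≤ (schattenNorm (2 * p) b * schattenNorm (2 * q) β) ^ 2 := by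
  set hA := (posSemidef_conjTranspose_mul_self b).isHermitian with hAdef
  set hC := (posSemidef_conjTranspose_mul_self β).isHermitian with hCdef
  set U : Matrix ι ι ℂ := (hA.eigenvectorUnitary : Matrix ι ι ℂ) with hU
  set V : Matrix ι ι ℂ := (hC.eigenvectorUnitary : Matrix ι ι ℂ) with hV
  have hAnn : ∀ k, 0 ≤ hA.eigenvalues k :=
    (posSemidef_conjTranspose_mul_self b).eigenvalues_nonneg
  have hCnn : ∀ k, 0 ≤ hC.eigenvalues k :=
    (posSemidef_conjTranspose_mul_self β).eigenvalues_nonneg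
  have hUU : U * Uᴴ = 1 := Unitary.coe_mul_star_self hA.eigenvectorUnitary
  have hVV : V * Vᴴ = 1 := Unitary.coe_mul_star_self hC.eigenvectorUnitary
  have hWW : (Uᵀ * V) * (Uᵀ * V)ᴴ = 1 := by
    rw [conjTranspose_mul, Matrix.mul_assoc, ← Matrix.mul_assoc V, hVV, Matrix.one_mul]
    have : (Uᴴ * U)ᵀ = 1 := by rw [mul_eq_one_comm.mp hUU, transpose_one]
    rwa [transpose_mul] at this
  have hrow := sum_norm_sq_row_of_mem_unitary hWW
  have hcol : ∀ l, ∑ k, ‖(Uᵀ * V) k l‖ ^ 2 = 1 := fun l => by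
    have h := sum_norm_sq_row_of_mem_unitary (W := (Uᵀ * V)ᴴ)
      (by rw [conjTranspose_conjTranspose]; exact mul_eq_one_comm.mp hWW) l
    simpa only [conjTranspose_apply, norm_star] using h
  have hsum : ∑ k, ∑ l, ‖(b * βᵀ) k l‖ ^ 2 =
      ∑ k, ∑ l, hA.eigenvalues k * hC.eigenvalues l * ‖(Uᵀ * V) k l‖ ^ 2 := by
    have h := trace_mul_transpose_eq_sum_eigenvalues hA hC
    have h' : trace (bᴴ * b * (βᴴ * β)ᵀ) = ((∑ k, ∑ l, ‖(b * βᵀ) k l‖ ^ 2 : ℝ) : ℂ) := by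
      have : trace (bᴴ * b * (βᴴ * β)ᵀ) = trace ((b * βᵀ) * (b * βᵀ)ᴴ) := by
        rw [conjTranspose_mul, transpose_mul, Matrix.mul_assoc, trace_mul_comm]
        simp only [Matrix.mul_assoc]
        rfl
      rw [this]
      push_cast
      simp only [trace, diag_apply, mul_apply (M := b * βᵀ), conjTranspose_apply]
      exact Finset.sum_congr rfl fun k _ => Finset.sum_congr rfl fun l _ => Complex.mul_conj' _
    rw [h'] at h
    exact_mod_cast h
  rw [hsum, mul_pow, schattenNorm_two_mul_sq hptop]
  by_cases hq : q = ∞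
  · have hp1 : p = 1 := by simpa [hq] using hpq
    subst hq
    have htop : schattenNorm (2 * ∞) β = opNorm β := by
      simp [schattenNorm, ENNReal.mul_top]
    rw [htop, hp1]
    simp only [ENNReal.toReal_one, Real.rpow_one, div_one]
    rw [Finset.sum_mul]
    refine Finset.sum_le_sum fun k _ => ?_
    calc ∑ l, hA.eigenvalues k * hC.eigenvalues l * ‖(Uᵀ * V) k l‖ ^ 2
        ≤ ∑ l, hA.eigenvalues k * opNorm β ^ 2 * ‖(Uᵀ * V) k l‖ ^ 2 := by
          refine Finset.sum_le_sum fun l _ => ?_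
          gcongr
          · exact hAnn k
          · exact eigenvalues_conjTranspose_mul_self_le β l
      _ = hA.eigenvalues k * opNorm β ^ 2 := by rw [← Finset.mul_sum, hrow, mul_one]
  · rw [schattenNorm_two_mul_sq hq]
    have hconj : p.toReal.HolderConjugate q.toReal := by
      have : p.HolderConjugate q := ENNReal.holderConjugate_iff.mpr hpq
      exact ENNReal.HolderConjugate.toReal_of_ne_top hptop hq
    exact sum_weight_mul_le_Lp_mul_Lq hconj hAnn hCnn (fun _ _ => by positivity) hrow hcol

/-- The bound `|T((a ⊗ α) y (b ⊗ β))| ≤ ‖a‖_{2p} ‖α‖_{2q} ‖y‖ ‖b‖_{2p} ‖β‖_{2q}`. -/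
theorem norm_tracePair_kronecker_mul_le {m : ℕ} {p q : ℝ≥0∞}
    (hptop : p ≠ ∞) (hpq : p⁻¹ + q⁻¹ = 1) (a b α β : Matrix (Fin m) (Fin m) ℂ)
    (y : Matrix (Fin m × Fin m) (Fin m × Fin m) ℂ) :
    ‖tracePair ((a ⊗ₖ α) * y * (b ⊗ₖ β))‖ ≤
      (schattenNorm (2 * p) a * schattenNorm (2 * q) α) * opNorm y *
        (schattenNorm (2 * p) b * schattenNorm (2 * q) β) := by
  have hvec : ∀ b β : Matrix (Fin m) (Fin m) ℂ,
      ‖(WithLp.toLp 2 fun kl : Fin m × Fin m => (b * βᵀ) kl.1 kl.2)‖ ≤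
        schattenNorm (2 * p) b * schattenNorm (2 * q) β := fun b β => by
    refine (sq_le_sq₀ (norm_nonneg _) (mul_nonneg (schattenNorm_nonneg _ _)
      (schattenNorm_nonneg _ _))).mp ?_
    rw [EuclideanSpace.norm_sq_eq, Fintype.sum_prod_type]
    exact sum_norm_sq_mul_transpose_le hptop hpq b β
  set ξ : EuclideanSpace ℂ (Fin m × Fin m) := WithLp.toLp 2 fun kl => (b * βᵀ) kl.1 kl.2 with hξ
  set η : EuclideanSpace ℂ (Fin m × Fin m) :=
    WithLp.toLp 2 fun kl => (aᴴ * αᴴᵀ) kl.1 kl.2 with hη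
  have hT : tracePair ((a ⊗ₖ α) * y * (b ⊗ₖ β)) =
      inner ℂ η (LinearMap.toContinuousLinearMap (toEuclideanLin y) ξ) := by
    have hL : tracePair ((a ⊗ₖ α) * y * (b ⊗ₖ β)) =
        ∑ i, ∑ j, ∑ Q, ∑ P, (a ⊗ₖ α) (i, i) P * y P Q * (b ⊗ₖ β) Q (j, j) := by
      simp only [tracePair, mul_apply, Finset.sum_mul]
    have hR : inner ℂ η (LinearMap.toContinuousLinearMap (toEuclideanLin y) ξ) =
        ∑ P, ∑ Q, ∑ j, ∑ i, (a ⊗ₖ α) (i, i) P * y P Q * (b ⊗ₖ β) Q (j, j) := by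
      rw [PiLp.inner_apply]
      refine Finset.sum_congr rfl fun P _ => ?_
      simp only [hη, hξ, RCLike.inner_apply, LinearMap.coe_toContinuousLinearMap',
        toLpLin_toLp, toLin'_apply, mulVec, dotProduct, mul_apply, transpose_apply, conjTranspose_apply,
        map_sum, map_mul, RCLike.star_def, Complex.conj_conj, kroneckerMap_apply,
        Finset.sum_mul, Finset.mul_sum]
      rw [Finset.sum_comm]
      refine Finset.sum_congr rfl fun Q _ => ?_
      rw [Finset.sum_comm]
      refine Finset.sum_congr rfl fun j _ => Finset.sum_congr rfl fun i _ => ?_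
      ring
    rw [hL, hR, Finset.sum_comm]
    calc _ = ∑ j, ∑ Q, ∑ i, ∑ P, (a ⊗ₖ α) (i, i) P * y P Q * (b ⊗ₖ β) Q (j, j) :=
          Finset.sum_congr rfl fun j _ => Finset.sum_comm
      _ = ∑ j, ∑ Q, ∑ P, ∑ i, (a ⊗ₖ α) (i, i) P * y P Q * (b ⊗ₖ β) Q (j, j) :=
          Finset.sum_congr rfl fun j _ => Finset.sum_congr rfl fun Q _ => Finset.sum_comm
      _ = ∑ Q, ∑ j, ∑ P, ∑ i, (a ⊗ₖ α) (i, i) P * y P Q * (b ⊗ₖ β) Q (j, j) := Finset.sum_comm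
      _ = ∑ Q, ∑ P, ∑ j, ∑ i, (a ⊗ₖ α) (i, i) P * y P Q * (b ⊗ₖ β) Q (j, j) :=
          Finset.sum_congr rfl fun Q _ => Finset.sum_comm
      _ = _ := Finset.sum_comm
  rw [hT]
  calc _ ≤ ‖η‖ * ‖LinearMap.toContinuousLinearMap (toEuclideanLin y) ξ‖ := norm_inner_le_norm _ _
    _ ≤ ‖η‖ * (opNorm y * ‖ξ‖) := by
      gcongr
      exact ContinuousLinearMap.le_opNorm _ _
    _ ≤ (schattenNorm (2 * p) a * schattenNorm (2 * q) α) * (opNorm y *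
        (schattenNorm (2 * p) b * schattenNorm (2 * q) β)) := by
      have h1 := hvec b β
      have h2 := hvec aᴴ αᴴ
      rw [schattenNorm_conjTranspose, schattenNorm_conjTranspose] at h2
      have := opNorm_nonneg y
      gcongr
      exact (norm_nonneg _).trans h2
    _ = _ := by ring

open scoped Matrix.Norms.L2Operator in
theorem IsStarProjection.opNorm_one_kronecker_le {ι κ : Type} [Fintype ι] [DecidableEq ι]
    [Fintype κ] [DecidableEq κ] {P : Matrix κ κ ℂ} (hP : IsStarProjection P) :
    opNorm ((1 : Matrix ι ι ℂ) ⊗ₖ P) ≤ 1 := by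
  refine IsStarProjection.norm_le (E := Matrix (ι × κ) (ι × κ) ℂ) _ ⟨?_, ?_⟩
  · rw [IsIdempotentElem, ← mul_kronecker_mul, Matrix.one_mul, hP.isIdempotentElem.eq]
  · rw [isSelfAdjoint_iff, star_eq_conjTranspose, conjTranspose_kronecker, conjTranspose_one]
    congr 1
    exact hP.isSelfAdjoint

/-- Every square matrix `α` has a one-sided generalized inverse whose product with `α` is the
orthogonal projection onto the range of `αᴴ`. -/
theorem exists_mul_isStarProjection {ι : Type} [Fintype ι] [DecidableEq ι] (α : Matrix ι ι ℂ) :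
    ∃ α' : Matrix ι ι ℂ, IsStarProjection (α' * α) ∧ α * (α' * α) = α := by
  set hA := (posSemidef_conjTranspose_mul_self α).isHermitian with hAdef
  set U : Matrix ι ι ℂ := (hA.eigenvectorUnitary : Matrix ι ι ℂ) with hU
  set D : Matrix ι ι ℂ := diagonal (RCLike.ofReal ∘ hA.eigenvalues) with hD
  set D' : Matrix ι ι ℂ := diagonal (fun i => ((hA.eigenvalues i)⁻¹ : ℂ)) with hD'
  have hAe : αᴴ * α = U * D * Uᴴ := by
    have := hA.spectral_theorem
    rwa [Unitary.conjStarAlgAut_apply] at this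
  have hUU : Uᴴ * U = 1 := Unitary.coe_star_mul_self hA.eigenvectorUnitary
  have hDD : D' * D * (D' * D) = D' * D := by
    simp only [hD, hD', diagonal_mul_diagonal, Function.comp_apply]
    congr 1; ext i
    by_cases h : hA.eigenvalues i = 0 <;> simp [h]
  have hDDs : (D' * D)ᴴ = D' * D := by
    simp only [hD, hD', diagonal_mul_diagonal, Function.comp_apply, diagonal_conjTranspose]
    congr 1; ext i
    simp
  have hDDD : D * (D' * D) = D := by
    simp only [hD, hD', diagonal_mul_diagonal, Function.comp_apply]
    congr 1; ext i
    by_cases h : hA.eigenvalues i = 0 <;> simp [h]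
  have hP : U * D' * Uᴴ * αᴴ * α = U * (D' * D) * Uᴴ := by
    rw [Matrix.mul_assoc _ αᴴ, hAe]
    calc _ = U * D' * (Uᴴ * U) * D * Uᴴ := by simp only [Matrix.mul_assoc]
      _ = _ := by rw [hUU, Matrix.mul_one]; simp only [Matrix.mul_assoc]
  have hPs : IsStarProjection (U * D' * Uᴴ * αᴴ * α) := by
    rw [hP]
    refine ⟨?_, ?_⟩
    · calc _ = U * (D' * D) * (Uᴴ * U) * (D' * D) * Uᴴ := by simp only [Matrix.mul_assoc]
        _ = U * (D' * D * (D' * D)) * Uᴴ := by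
          rw [hUU, Matrix.mul_one]; simp only [Matrix.mul_assoc]
        _ = _ := by rw [hDD]
    · rw [isSelfAdjoint_iff, star_eq_conjTranspose, conjTranspose_mul, conjTranspose_mul, hDDs,
        conjTranspose_conjTranspose, ← Matrix.mul_assoc U]
  refine ⟨U * D' * Uᴴ * αᴴ, hPs, ?_⟩
  have hAP : αᴴ * α * (U * D' * Uᴴ * αᴴ * α) = αᴴ * α := by
    rw [hP, hAe]
    calc _ = U * D * (Uᴴ * U) * (D' * D) * Uᴴ := by simp only [Matrix.mul_assoc]
      _ = U * (D * (D' * D)) * Uᴴ := by rw [hUU, Matrix.mul_one]; simp only [Matrix.mul_assoc]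
      _ = _ := by rw [hDDD]
  have h0 : αᴴ * α * (U * D' * Uᴴ * αᴴ * α - 1) = 0 := by
    rw [Matrix.mul_sub, hAP, Matrix.mul_one, sub_self]
  have h1 := (conjTranspose_mul_self_mul_eq_zero α _).mp h0
  rwa [Matrix.mul_sub, Matrix.mul_one, sub_eq_zero] at h1

section Amplification

variable {N m n : ℕ} (S : Submodule ℂ (Matrix (Fin N) (Fin N) ℂ))

theorem block_one_kronecker_mul (α β : Matrix (Fin n) (Fin n) ℂ)
    (x : Matrix (Fin N × Fin n) (Fin N × Fin n) ℂ) (k l : Fin n) :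
    (Matrix.of fun i j => ((1 ⊗ₖ α) * x * (1 ⊗ₖ β) :
      Matrix (Fin N × Fin n) (Fin N × Fin n) ℂ) (i, k) (j, l)) =
      ∑ k', ∑ l', (α k k' * β l' l) • (Matrix.of fun i j => x (i, k') (j, l')) := by
  ext i j
  simp only [of_apply, mul_apply, Fintype.sum_prod_type, kroneckerMap_apply, one_apply,
    Matrix.sum_apply, Matrix.smul_apply, smul_eq_mul, Finset.sum_mul, ite_mul, one_mul, zero_mul,
    mul_ite, mul_zero, Finset.sum_ite_irrel, Finset.sum_const_zero, Finset.sum_ite_eq,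
    Finset.sum_ite_eq', Finset.mem_univ, if_true]
  rw [Finset.sum_comm]
  refine Finset.sum_congr rfl fun k' _ => Finset.sum_congr rfl fun l' _ => ?_
  ring

theorem block_one_kronecker_mul_mem (α β : Matrix (Fin n) (Fin n) ℂ)
    {x : Matrix (Fin N × Fin n) (Fin N × Fin n) ℂ}
    (h : ∀ k l : Fin n, (Matrix.of fun i j => x (i, k) (j, l)) ∈ S) (k l : Fin n) :
    (Matrix.of fun i j => ((1 ⊗ₖ α) * x * (1 ⊗ₖ β) :
      Matrix (Fin N × Fin n) (Fin N × Fin n) ℂ) (i, k) (j, l))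
      ∈ S := by
  rw [block_one_kronecker_mul]
  exact S.sum_mem fun k' _ => S.sum_mem fun l' _ => S.smul_mem _ (h k' l')

theorem ampOn_one_kronecker_mul (u : S →ₗ[ℂ] Matrix (Fin m) (Fin m) ℂ)
    (α β : Matrix (Fin n) (Fin n) ℂ)
    {x v : Matrix (Fin N × Fin n) (Fin N × Fin n) ℂ}
    (hx : ∀ k l : Fin n, (Matrix.of fun i j => x (i, k) (j, l)) ∈ S)
    (hv : ∀ k l : Fin n, (Matrix.of fun i j => v (i, k) (j, l)) ∈ S)
    (hvx : v = (1 ⊗ₖ α) * x * (1 ⊗ₖ β)) :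
    ampOn S u v hv = (1 ⊗ₖ α) * ampOn S u x hx * (1 ⊗ₖ β) := by
  ext ⟨i, k⟩ ⟨j, l⟩
  have h1 : (⟨Matrix.of fun i j => v (i, k) (j, l), hv k l⟩ : S) =
      ∑ k', ∑ l', (α k k' * β l' l) • ⟨Matrix.of fun i j => x (i, k') (j, l'), hx k' l'⟩ := by
    apply Subtype.ext
    subst hvx
    simp only [block_one_kronecker_mul, Submodule.coe_sum, Submodule.coe_smul]
  have h2 := congrFun (congrFun (block_one_kronecker_mul α β (ampOn S u x hx) k l) i) j
  simp only [of_apply] at h2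
  rw [h2]
  simp only [ampOn, of_apply, h1, map_sum, map_smul, Matrix.sum_apply, Matrix.smul_apply]

end Amplification

theorem pisierNorm_le {N n : ℕ} (p : ℝ≥0∞) {x : Matrix (Fin N × Fin n) (Fin N × Fin n) ℂ}
    (a b : Matrix (Fin N) (Fin N) ℂ) (y : Matrix (Fin N × Fin n) (Fin N × Fin n) ℂ)
    (hx : x = (a ⊗ₖ 1) * y * (b ⊗ₖ 1)) :
    pisierNorm p x ≤ schattenNorm (2 * p) a * opNorm y * schattenNorm (2 * p) b := by
  refine csInf_le ⟨0, ?_⟩ ⟨a, b, y, hx, rfl⟩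
  rintro r ⟨a, b, y, -, rfl⟩
  exact mul_nonneg (mul_nonneg (schattenNorm_nonneg _ _) (opNorm_nonneg _))
    (schattenNorm_nonneg _ _)

/-- The trace pairing of `(1 ⊗ α) z (1 ⊗ β)` is controlled by the norm of `z` in `S_p[M_m]`. -/
theorem norm_tracePair_le_pisierNorm {m : ℕ} {p q : ℝ≥0∞} (hptop : p ≠ ∞)
    (hpq : p⁻¹ + q⁻¹ = 1) (α β : Matrix (Fin m) (Fin m) ℂ)
    (z : Matrix (Fin m × Fin m) (Fin m × Fin m) ℂ) :
    ‖tracePair ((1 ⊗ₖ α) * z * (1 ⊗ₖ β))‖ ≤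
      schattenNorm (2 * q) α * schattenNorm (2 * q) β * pisierNorm p z := by
  have hK : 0 ≤ schattenNorm (2 * q) α * schattenNorm (2 * q) β :=
    mul_nonneg (schattenNorm_nonneg _ _) (schattenNorm_nonneg _ _)
  have hfac : ∀ (a b : Matrix (Fin m) (Fin m) ℂ) y, z = (a ⊗ₖ 1) * y * (b ⊗ₖ 1) →
      ‖tracePair ((1 ⊗ₖ α) * z * (1 ⊗ₖ β))‖ ≤
        schattenNorm (2 * q) α * schattenNorm (2 * q) β *
          (schattenNorm (2 * p) a * opNorm y * schattenNorm (2 * p) b) := by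
    intro a b y hz
    have : (1 ⊗ₖ α) * z * (1 ⊗ₖ β) = (a ⊗ₖ α) * y * (b ⊗ₖ β) := by
      calc _ = ((1 ⊗ₖ α) * (a ⊗ₖ 1)) * y * ((b ⊗ₖ 1) * (1 ⊗ₖ β)) := by
            rw [hz]; simp only [Matrix.mul_assoc]
        _ = _ := by simp only [← mul_kronecker_mul, Matrix.one_mul, Matrix.mul_one]
    rw [this]
    refine (norm_tracePair_kronecker_mul_le hptop hpq a b α β y).trans_eq ?_
    ring
  have hne : z = ((1 : Matrix (Fin m) (Fin m) ℂ) ⊗ₖ (1 : Matrix (Fin m) (Fin m) ℂ)) * z *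
      ((1 : Matrix (Fin m) (Fin m) ℂ) ⊗ₖ (1 : Matrix (Fin m) (Fin m) ℂ)) := by
    rw [one_kronecker_one, Matrix.one_mul, Matrix.mul_one]
  rcases hK.eq_or_lt with h0 | hpos
  · have := hfac 1 1 z hne
    rwa [← h0, zero_mul] at this ⊢
  · rw [← div_le_iff₀' hpos]
    refine le_csInf ⟨_, 1, 1, z, hne, rfl⟩ ?_
    rintro r ⟨a, b, y, hz, rfl⟩
    rw [div_le_iff₀' hpos]
    exact hfac a b y hz

/-- Inequality (3.11), the key step in the proof of the extension theorem 3.5. -/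
theorem abs_trace_pairing_le_rho_of_subspace {N m : ℕ} (p q : ℝ≥0∞) (hp : 1 ≤ p)
    (hptop : p ≠ ∞) (hpq : p⁻¹ + q⁻¹ = 1)
    (S : Submodule ℂ (Matrix (Fin N) (Fin N) ℂ))
    (u : S →ₗ[ℂ] Matrix (Fin m) (Fin m) ℂ)
    (hb : ∀ (n : ℕ), 1 ≤ n → ∀ (x : Matrix (Fin N × Fin n) (Fin N × Fin n) ℂ)
      (h : ∀ k l : Fin n, (Matrix.of fun i j => x (i, k) (j, l)) ∈ S),
      pisierNorm p (ampOn S u x h) ≤ pisierNorm p x) :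
    ∀ (v : Matrix (Fin N × Fin m) (Fin N × Fin m) ℂ)
      (h : ∀ k l : Fin m, (Matrix.of fun i j => v (i, k) (j, l)) ∈ S),
      ‖tracePair (ampOn S u v h)‖ ≤ rho p q v := by
  intro v h
  refine le_csInf ⟨_, 1, 1, 1, 1, v, by simp, rfl⟩ ?_
  rintro r ⟨γ, δ, α, β, g, hv, rfl⟩
  have := schattenNorm_nonneg (2 * p) γ
  have := schattenNorm_nonneg (2 * p) δ
  have := schattenNorm_nonneg (2 * q) α
  have := schattenNorm_nonneg (2 * q) β
  have := opNorm_nonneg g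
  rcases Nat.eq_zero_or_pos m with rfl | hm
  · simp only [tracePair, Finset.univ_eq_empty, Finset.sum_empty, norm_zero]
    positivity
  obtain ⟨α', hP, hα⟩ := exists_mul_isStarProjection α
  obtain ⟨β', hQ, hβ⟩ := exists_mul_isStarProjection βᴴ
  have hβ' : β * β'ᴴ * β = β := by
    have := congrArg conjTranspose hβ
    simpa only [conjTranspose_mul, conjTranspose_conjTranspose] using this
  have hQ' : IsStarProjection (β * β'ᴴ) := by
    have : β * β'ᴴ = β' * βᴴ := by
      rw [← hQ.isSelfAdjoint.star_eq, star_eq_conjTranspose, conjTranspose_mul,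
        conjTranspose_conjTranspose]
    rwa [this]
  set x := (1 ⊗ₖ α') * v * (1 ⊗ₖ β'ᴴ) with hx
  have hxS := block_one_kronecker_mul_mem S α' β'ᴴ h
  have hxe : x = (γ ⊗ₖ 1) * ((1 ⊗ₖ (α' * α)) * g * (1 ⊗ₖ (β * β'ᴴ))) * (δ ⊗ₖ 1) := by
    calc x = ((1 ⊗ₖ α') * (γ ⊗ₖ α)) * g * ((δ ⊗ₖ β) * (1 ⊗ₖ β'ᴴ)) := by
          rw [hx, hv]; simp only [Matrix.mul_assoc]
      _ = ((γ ⊗ₖ 1) * (1 ⊗ₖ (α' * α))) * g * ((1 ⊗ₖ (β * β'ᴴ)) * (δ ⊗ₖ 1)) := by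
          simp only [← mul_kronecker_mul, Matrix.one_mul, Matrix.mul_one]
      _ = _ := by simp only [Matrix.mul_assoc]
  have hvx : v = (1 ⊗ₖ α) * x * (1 ⊗ₖ β) := by
    calc v = (γ ⊗ₖ (α * (α' * α))) * g * (δ ⊗ₖ (β * β'ᴴ * β)) := by rw [hα, hβ', hv]
      _ = ((1 ⊗ₖ α) * (1 ⊗ₖ α') * (γ ⊗ₖ α)) * g * ((δ ⊗ₖ β) * (1 ⊗ₖ β'ᴴ) * (1 ⊗ₖ β)) := by
          simp only [← mul_kronecker_mul, Matrix.one_mul, Matrix.mul_one, Matrix.mul_assoc]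
      _ = _ := by rw [hx, hv]; simp only [Matrix.mul_assoc]
  have hy : opNorm ((1 ⊗ₖ (α' * α)) * g * (1 ⊗ₖ (β * β'ᴴ))) ≤ opNorm g := by
    calc _ ≤ opNorm (1 ⊗ₖ (α' * α)) * opNorm g * opNorm (1 ⊗ₖ (β * β'ᴴ)) :=
          (opNorm_mul_le _ _).trans
            (mul_le_mul_of_nonneg_right (opNorm_mul_le _ _) (opNorm_nonneg _))
      _ ≤ 1 * opNorm g * 1 := by
          gcongr
          · exact opNorm_nonneg _
          · exact hP.opNorm_one_kronecker_le
          · exact hQ'.opNorm_one_kronecker_le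
      _ = opNorm g := by ring
  rw [ampOn_one_kronecker_mul S u α β hxS h hvx]
  calc _ ≤ schattenNorm (2 * q) α * schattenNorm (2 * q) β * pisierNorm p (ampOn S u x hxS) :=
        norm_tracePair_le_pisierNorm hptop hpq α β _
    _ ≤ schattenNorm (2 * q) α * schattenNorm (2 * q) β *
        (schattenNorm (2 * p) γ * opNorm g * schattenNorm (2 * p) δ) := by
        gcongr
        refine (hb m hm x hxS).trans ((pisierNorm_le p γ δ _ hxe).trans ?_)
        gcongr
    _ = _ := by ring
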